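/- arXiv:0905.2245 — 2 statements merged into one kernel-verified Lean document; each statement's English description precedes it below -/
import Mathlib

section
/- Let R be a basic left Harada algebra with modules P_{ij} := rad^{j-1}(e_{i1}R) as below, and let f : P_{ij} → P_{kl} be a homomorphism of right R-modules. Then f is not injective if and only if the image of f is contained in rad(P_{k n_k}). In particular, if i = k and j < l, or if i ≠ k, then the image of f is contained in rad(P_{k n_k}). -/
/-!
Common setup.  `K` is an algebraically closed field and `R` a finite-dimensional associative
unital `K`-algebra.  Right `R`-modules are formalized as modules over the opposite ring `Rᵐᵒᵖ`
(so that `MulOpposite.op r • x = x * r`).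
-/

open MulOpposite

/-- The right ideal `xR` of a ring `R`, as a submodule of `R` over `Rᵐᵒᵖ`. -/
def rightIdeal (R : Type) [Ring R] (x : R) : Submodule Rᵐᵒᵖ R :=
  Submodule.span Rᵐᵒᵖ {x}

/-- The Jacobson radical of a submodule `N` (the intersection of the maximal submodules of the
module `N`), viewed as a submodule of the ambient module.  Iterating this operation gives the
iterated radicals `rad^k`. -/
def radSub {A M : Type} [Ring A] [AddCommGroup M] [Module A M] (N : Submodule A M) :
    Submodule A M :=
  Submodule.map N.subtype (sInf {P : Submodule A ↥N | IsCoatom P})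

/-- A module is indecomposable if it is nonzero and admits no nontrivial direct sum
decomposition. -/
def IsIndecomposableMod (A M : Type) [Ring A] [AddCommGroup M] [Module A M] : Prop :=
  Nontrivial M ∧ ∀ N N' : Submodule A M, IsCompl N N' → N = ⊥ ∨ N' = ⊥

/-- A module has projective dimension at most one iff it admits a surjection from a projective
module with projective kernel. -/
def PdLeOne (A : Type) [Ring A] (M : Type) [AddCommGroup M] [Module A M] : Prop :=
  ∃ (P : ModuleCat.{0} A) (f : ↥P →ₗ[A] M),
    Module.Projective A ↥P ∧ Function.Surjective f ∧
      Module.Projective A ↥(LinearMap.ker f)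

/-- `Ext¹_A(M,N) = 0`, expressed by the splitting of every short exact sequence
`0 → N → E → M → 0`. -/
def Ext1Zero (A : Type) [Ring A] (M N : Type) [AddCommGroup M] [Module A M]
    [AddCommGroup N] [Module A N] : Prop :=
  ∀ (E : ModuleCat.{0} A) (i : N →ₗ[A] ↥E) (p : ↥E →ₗ[A] M),
    Function.Injective i → Function.Surjective p → LinearMap.range i = LinearMap.ker p →
    ∃ s : M →ₗ[A] ↥E, p.comp s = LinearMap.id

/-- `X ∈ add T` : `X` is a direct summand of a finite direct sum of copies of `T`. -/
def InAdd (A : Type) [Ring A] (T X : Type) [AddCommGroup T] [Module A T]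
    [AddCommGroup X] [Module A X] : Prop :=
  ∃ (k : ℕ) (f : X →ₗ[A] (Fin k → T)) (g : (Fin k → T) →ₗ[A] X),
    g.comp f = LinearMap.id

/-- `T` is a (finitely generated) tilting right `R`-module: projective dimension at most one,
no self-extensions, and there is a short exact sequence `0 → R → T₀ → T₁ → 0` with
`T₀, T₁ ∈ add T`. -/
def IsTiltingRight (R : Type) [Ring R] (T : Type) [AddCommGroup T] [Module Rᵐᵒᵖ T] : Prop :=
  Module.Finite Rᵐᵒᵖ T ∧ PdLeOne Rᵐᵒᵖ T ∧ Ext1Zero Rᵐᵒᵖ T T ∧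
    ∃ (T₀ T₁ : ModuleCat.{0} Rᵐᵒᵖ) (f : R →ₗ[Rᵐᵒᵖ] ↥T₀) (g : ↥T₀ →ₗ[Rᵐᵒᵖ] ↥T₁),
      InAdd Rᵐᵒᵖ T ↥T₀ ∧ InAdd Rᵐᵒᵖ T ↥T₁ ∧
        Function.Injective f ∧ Function.Surjective g ∧ LinearMap.range f = LinearMap.ker g

/-- `T` is basic: it is an (internal) direct sum of pairwise non-isomorphic indecomposable
submodules. -/
def IsBasicMod (A : Type) [Ring A] (T : Type) [AddCommGroup T] [Module A T] : Prop :=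
  ∃ (k : ℕ) (N : Fin k → Submodule A T),
    DirectSum.IsInternal N ∧ (∀ a, IsIndecomposableMod A ↥(N a)) ∧
      ∀ a b, a ≠ b → IsEmpty (↥(N a) ≃ₗ[A] ↥(N b))

/-- The setoid identifying isomorphic modules (among those with property `P`). -/
def isoSetoid (A : Type) [Ring A] (P : ModuleCat.{0} A → Prop) :
    Setoid {M : ModuleCat.{0} A // P M} where
  r M N := Nonempty (↥M.1 ≃ₗ[A] ↥N.1)
  iseqv := ⟨fun M => ⟨LinearEquiv.refl A ↥M.1⟩, fun ⟨e⟩ => ⟨e.symm⟩,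
    fun ⟨e⟩ ⟨f⟩ => ⟨e.trans f⟩⟩

/-- The data exhibiting a ring `R` as a basic left Harada algebra:
a complete set `{e i j}` of orthogonal primitive idempotents with pairwise non-isomorphic
right ideals `(e i j)R` (`R` is basic), such that each `(e i 0)R` is an injective right
module, and `(e i j)R ≅ rad ((e i (j-1))R)` for `j ≥ 1`.  (Indices are shifted by one from
the paper: the paper's `e_{ij}` is `e i (j-1)` here.) -/
structure HaradaData (R : Type) [Ring R] : Type where
  m : ℕ
  hm : 0 < m
  n : Fin m → ℕ
  hn : ∀ i, 0 < n i
  e : (i : Fin m) → Fin (n i) → R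
  idem : ∀ i j, IsIdempotentElem (e i j)
  orth : ∀ p q : Σ i : Fin m, Fin (n i), p ≠ q → e p.1 p.2 * e q.1 q.2 = 0
  sum_eq_one : ∑ p : Σ i : Fin m, Fin (n i), e p.1 p.2 = 1
  indec : ∀ i j, IsIndecomposableMod Rᵐᵒᵖ ↥(rightIdeal R (e i j))
  basic : ∀ p q : Σ i : Fin m, Fin (n i), p ≠ q →
    IsEmpty (↥(rightIdeal R (e p.1 p.2)) ≃ₗ[Rᵐᵒᵖ] ↥(rightIdeal R (e q.1 q.2)))
  inj : ∀ i, Module.Injective Rᵐᵒᵖ ↥(rightIdeal R (e i ⟨0, hn i⟩))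
  rad_iso : ∀ (i : Fin m) (j : Fin (n i)), 0 < j.val →
    Nonempty (↥(rightIdeal R (e i j)) ≃ₗ[Rᵐᵒᵖ]
      ↥(radSub (rightIdeal R (e i ⟨j.val - 1, Nat.lt_of_le_of_lt (Nat.sub_le j.val 1) j.isLt⟩))))

variable {R : Type} [Ring R]

/-- `H.P i j = rad^j ((e i 0)R)`; this is the paper's `P_{i,j+1} = rad^j (e_{i1}R)`,
a submodule of `R`. -/
def HaradaData.P (H : HaradaData R) (i : Fin H.m) (j : Fin (H.n i)) : Submodule Rᵐᵒᵖ R :=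
  radSub^[j.val] (rightIdeal R (H.e i ⟨0, H.hn i⟩))

/-- The quotient module `P_{ik}/P_{il}` (for `l ≥ k` we have `H.P i l ≤ H.P i k`). -/
abbrev HaradaData.Quot (H : HaradaData R) (i : Fin H.m) (k l : Fin (H.n i)) : Type :=
  ↥(H.P i k) ⧸ Submodule.comap (H.P i k).subtype (H.P i l)

/-- The last index (the paper's `n_i`) in `Fin (H.n i)`. -/
def HaradaData.last (H : HaradaData R) (i : Fin H.m) : Fin (H.n i) :=
  ⟨H.n i - 1, Nat.sub_lt (H.hn i) one_pos⟩

/-- The right ideal `I = ⊕_{i,j} rad^{n_i - j + 1}(e_{ij}R)` of the paper. -/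
def HaradaData.I (H : HaradaData R) : Submodule Rᵐᵒᵖ R :=
  ⨆ p : Σ i : Fin H.m, Fin (H.n i),
    radSub^[H.n p.1 - p.2.val] (rightIdeal R (H.e p.1 p.2))

/-- The submodule `T·I` of a right module `T`, for `I` a right ideal of `R`. -/
def smulSub (I : Submodule Rᵐᵒᵖ R) (T : Type) [AddCommGroup T] [Module Rᵐᵒᵖ T] :
    Submodule Rᵐᵒᵖ T :=
  Submodule.span Rᵐᵒᵖ {x : T | ∃ (t : T) (r : R), r ∈ I ∧ x = op r • t}

section Helpers

/-- A split surjection from an indecomposable module onto a nonzero module is injective. -/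
theorem aux_split_inj {A M N : Type} [Ring A] [AddCommGroup M] [Module A M] [AddCommGroup N]
    [Module A N] [Nontrivial N] (hM : IsIndecomposableMod A M) (r : M →ₗ[A] N) (s : N →ₗ[A] M)
    (h : ∀ x, r (s x) = x) : Function.Injective r := by
  have hc : IsCompl (LinearMap.ker r) (LinearMap.range s) := by
    constructor
    · rw [Submodule.disjoint_def]
      rintro x hx ⟨y, rfl⟩
      rw [LinearMap.mem_ker, h] at hx
      rw [hx, map_zero]
    · rw [codisjoint_iff, eq_top_iff]
      intro x _
      refine Submodule.mem_sup.mpr ⟨x - s (r x), ?_, s (r x), ⟨_, rfl⟩, by abel⟩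
      rw [LinearMap.mem_ker, map_sub, h, sub_self]
  rcases hM.2 _ _ hc with h1 | h1
  · exact LinearMap.ker_eq_bot.mp h1
  · exfalso
    obtain ⟨x, hx⟩ := exists_ne (0 : N)
    apply hx
    have : s x ∈ LinearMap.range s := ⟨x, rfl⟩
    rw [h1, Submodule.mem_bot] at this
    rw [← h x, this, map_zero]

/-- Fitting's lemma for indecomposable modules of finite length. -/
theorem aux_fitting {A M : Type} [Ring A] [AddCommGroup M] [Module A M] [IsNoetherian A M]
    [IsArtinian A M] (hM : IsIndecomposableMod A M) (f : Module.End A M) :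
    Function.Bijective f ∨ IsNilpotent f := by
  obtain ⟨k, hk⟩ := Filter.eventually_atTop.mp f.eventually_isCompl_ker_pow_range_pow
  have hc := hk (k + 1) (Nat.le_succ k)
  rcases hM.2 _ _ hc with h1 | h1
  · left
    have hinj : Function.Injective f := by
      rw [← LinearMap.ker_eq_bot, eq_bot_iff]
      intro x hx
      have : x ∈ LinearMap.ker (f ^ (k + 1)) := by
        rw [LinearMap.mem_ker, pow_succ, Module.End.mul_apply, LinearMap.mem_ker.mp hx, map_zero]
      rwa [h1] at this
    exact ⟨hinj, IsArtinian.surjective_of_injective_endomorphism f hinj⟩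
  · right
    exact ⟨k + 1, LinearMap.range_eq_bot.mp h1⟩

/-- An indecomposable injective module of finite length is uniform. -/
theorem aux_uniform {A M : Type} [Ring A] [AddCommGroup M] [Module A M] [IsNoetherian A M]
    [IsArtinian A M] (hM : IsIndecomposableMod A M) (hI : Module.Injective A M)
    (B C : Submodule A M) (hB : B ≠ ⊥) (hBC : Disjoint B C) : C = ⊥ := by
  have hinj : Function.Injective (B.subtype.coprod C.subtype) := by
    rw [← LinearMap.ker_eq_bot, LinearMap.ker_coprod_of_disjoint_range]
    · simp
    · simpa using hBC
  obtain ⟨φ, hφ⟩ := hI.out (B.subtype.coprod C.subtype) hinj (B.subtype.comp (LinearMap.fst A B C))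
  have hφB : ∀ b : B, φ b = b := fun b => by simpa using hφ (b, 0)
  have hφC : ∀ c : C, φ c = 0 := fun c => by simpa using hφ (0, c)
  rcases aux_fitting hM φ with h | ⟨n, h⟩
  · rw [eq_bot_iff]
    intro c hc
    exact h.1 (by rw [hφC ⟨c, hc⟩, map_zero])
  · exfalso
    apply hB
    rw [eq_bot_iff]
    intro b hb
    have key : ∀ n : ℕ, (φ ^ n) b = b := by
      intro n
      induction n with
      | zero => simp
      | succ n ih => rw [pow_succ, Module.End.mul_apply, hφB ⟨b, hb⟩]; exact ih
    have := key n
    rw [h] at this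
    exact this.symm

/-- In an indecomposable projective module of finite length two proper submodules do not span. -/
theorem aux_local {A M : Type} [Ring A] [AddCommGroup M] [Module A M] [IsNoetherian A M]
    [IsArtinian A M] (hM : IsIndecomposableMod A M) (hP : Module.Projective A M)
    (B C : Submodule A M) (hBC : B ⊔ C = ⊤) : B = ⊤ ∨ C = ⊤ := by
  have hsurj : Function.Surjective (B.subtype.coprod C.subtype) := by
    rw [← LinearMap.range_eq_top, LinearMap.range_coprod]
    simpa using hBC
  obtain ⟨s, hs⟩ := Module.projective_lifting_property _ LinearMap.id hsurj
  let φ : Module.End A M := B.subtype.comp ((LinearMap.fst A B C).comp s)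
  let ψ : Module.End A M := C.subtype.comp ((LinearMap.snd A B C).comp s)
  have hφψ : ψ = 1 - φ := by
    rw [eq_sub_iff_add_eq']
    ext x
    simpa [φ, ψ] using LinearMap.congr_fun hs x
  rcases aux_fitting hM φ with h | h
  · left
    rw [eq_top_iff]
    intro x _
    obtain ⟨y, rfl⟩ := h.2 x
    exact (s y).1.2
  · right
    have hu : IsUnit ψ := by rw [hφψ]; exact h.isUnit_one_sub
    rw [eq_top_iff]
    intro x _
    obtain ⟨y, rfl⟩ := ((Module.End.isUnit_iff ψ).mp hu).2 x
    exact (s y).2.2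

theorem aux_le_jac {A M : Type} [Ring A] [AddCommGroup M] [Module A M] [IsNoetherian A M]
    [IsArtinian A M] (hM : IsIndecomposableMod A M) (hP : Module.Projective A M)
    (B : Submodule A M) (hB : B ≠ ⊤) : B ≤ sInf {P : Submodule A M | IsCoatom P} := by
  refine le_sInf fun C hC => ?_
  by_contra hle
  have : B ⊔ C = ⊤ := hC.2 _ (lt_of_le_of_ne le_sup_right (fun h => hle (by rw [h]; exact le_sup_left)))
  rcases aux_local hM hP B C this with h | h
  · exact hB h
  · exact hC.1 h

theorem aux_radSub_le {A M : Type} [Ring A] [AddCommGroup M] [Module A M] (N : Submodule A M) :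
    radSub N ≤ N := Submodule.map_subtype_le _ _

theorem aux_radSub_lt {A M : Type} [Ring A] [AddCommGroup M] [Module A M] [IsNoetherian A M]
    (N : Submodule A M) [Nontrivial N] : radSub N < N := by
  refine lt_of_le_of_ne (aux_radSub_le N) fun h => ?_
  have h1 : (sInf {P : Submodule A ↥N | IsCoatom P}) < ⊤ := Module.jacobson_lt_top A N
  apply h1.ne
  rw [eq_top_iff]
  intro x _
  have hx : (x : M) ∈ radSub N := by rw [h]; exact x.2
  obtain ⟨y, hy, hyx⟩ := hx
  have : y = x := Subtype.ext hyx
  exact this ▸ hy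

theorem aux_le_radSub {A M : Type} [Ring A] [AddCommGroup M] [Module A M] [IsNoetherian A M]
    [IsArtinian A M] (N : Submodule A M) (hM : IsIndecomposableMod A N)
    (hP : Module.Projective A N) (L : Submodule A M) (hL : L ≤ N) (hne : L ≠ N) :
    L ≤ radSub N := by
  have h := aux_le_jac hM hP (L.comap N.subtype) (by
    rw [Ne, Submodule.comap_subtype_eq_top]
    exact fun h => hne (le_antisymm hL h))
  intro x hx
  exact ⟨⟨x, hL hx⟩, h hx, rfl⟩

theorem aux_radSub_equiv {A M : Type} [Ring A] [AddCommGroup M] [Module A M]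
    (N N' : Submodule A M) (e : N ≃ₗ[A] N') : Nonempty (radSub N ≃ₗ[A] radSub N') := by
  have h : (Module.jacobson A N).map e.toLinearMap = Module.jacobson A N' :=
    Module.map_jacobson_of_bijective (f := e.toLinearMap) e.bijective
  exact ⟨(Submodule.equivMapOfInjective N.subtype N.injective_subtype _).symm.trans
    ((e.submoduleMap (Module.jacobson A N)).trans ((LinearEquiv.ofEq _ _ h).trans
      (Submodule.equivMapOfInjective N'.subtype N'.injective_subtype _)))⟩

theorem aux_indec_equiv {A M N : Type} [Ring A] [AddCommGroup M] [Module A M] [AddCommGroup N]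
    [Module A N] (e : M ≃ₗ[A] N) (hM : IsIndecomposableMod A M) : IsIndecomposableMod A N := by
  obtain ⟨h0, h1⟩ := hM
  refine ⟨e.symm.toEquiv.nontrivial, fun B C hBC => ?_⟩
  have := (Submodule.orderIsoMapComap e.symm).isCompl hBC
  rcases h1 _ _ this with h | h
  · left; simpa using h
  · right; simpa using h

theorem aux_no_inj {A M : Type} [Ring A] [AddCommGroup M] [Module A M] [IsArtinian A M]
    (L N : Submodule A M) (hLN : L < N) (f : N →ₗ[A] M) (hf : Function.Injective f)
    (hr : ∀ x, f x ∈ L) : False := by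
  let g : N →ₗ[A] N := f.codRestrict N (fun x => hLN.le (hr x))
  have hg : Function.Injective g := fun x y h => hf (congrArg Subtype.val h)
  have hs := IsArtinian.surjective_of_injective_endomorphism g hg
  apply hLN.not_ge
  intro x hx
  obtain ⟨y, hy⟩ := hs ⟨x, hx⟩
  have : f y = x := congrArg Subtype.val hy
  exact this ▸ hr y

theorem aux_proj {R : Type} [Ring R] (e : R) (he : IsIdempotentElem e) :
    Module.Projective Rᵐᵒᵖ (rightIdeal R e) := by
  have hR : Module.Projective Rᵐᵒᵖ R := by
    let E : Rᵐᵒᵖ ≃ₗ[Rᵐᵒᵖ] R :=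
      { toFun := unop, invFun := op, map_add' := fun _ _ => rfl, map_smul' := fun _ _ => rfl,
        left_inv := fun _ => rfl, right_inv := fun _ => rfl }
    exact Module.Projective.of_equiv' E
  let p : R →ₗ[Rᵐᵒᵖ] rightIdeal R e :=
    { toFun := fun x => ⟨e * x, Submodule.mem_span_singleton.mpr ⟨op x, rfl⟩⟩
      map_add' := fun x y => Subtype.ext (mul_add _ _ _)
      map_smul' := fun r x => Subtype.ext (mul_assoc _ _ _).symm }
  refine Module.Projective.of_split (rightIdeal R e).subtype p ?_
  ext ⟨x, hx⟩
  obtain ⟨r, rfl⟩ := Submodule.mem_span_singleton.mp hx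
  change e * (e * unop r) = e * unop r
  rw [← mul_assoc, he.eq]

theorem aux_P_equiv {R : Type} [Ring R] (H : HaradaData R) (i : Fin H.m) (t : ℕ)
    (ht : t < H.n i) : Nonempty (rightIdeal R (H.e i ⟨t, ht⟩) ≃ₗ[Rᵐᵒᵖ] H.P i ⟨t, ht⟩) := by
  induction t with
  | zero => exact ⟨LinearEquiv.refl _ _⟩
  | succ t ih =>
    obtain ⟨e⟩ := ih (Nat.lt_of_succ_lt ht)
    obtain ⟨e1⟩ := H.rad_iso i ⟨t + 1, ht⟩ (Nat.succ_pos t)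
    obtain ⟨e2⟩ := aux_radSub_equiv _ _ e
    have h : radSub (H.P i ⟨t, Nat.lt_of_succ_lt ht⟩) = H.P i ⟨t + 1, ht⟩ := by
      simp only [HaradaData.P, Function.iterate_succ_apply']
    exact ⟨e1.trans (e2.trans (LinearEquiv.ofEq _ _ h))⟩

theorem aux_P_indec {R : Type} [Ring R] (H : HaradaData R) (i : Fin H.m) (j : Fin (H.n i)) :
    IsIndecomposableMod Rᵐᵒᵖ (H.P i j) := by
  obtain ⟨e⟩ := aux_P_equiv H i j.1 j.2
  exact aux_indec_equiv e (H.indec i j)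

theorem aux_P_proj {R : Type} [Ring R] (H : HaradaData R) (i : Fin H.m) (j : Fin (H.n i)) :
    Module.Projective Rᵐᵒᵖ (H.P i j) := by
  obtain ⟨e⟩ := aux_P_equiv H i j.1 j.2
  have := aux_proj _ (H.idem i j)
  exact Module.Projective.of_equiv' e

theorem aux_P_succ {R : Type} [Ring R] (H : HaradaData R) (i : Fin H.m) (t : ℕ)
    (ht : t + 1 < H.n i) :
    H.P i ⟨t + 1, ht⟩ = radSub (H.P i ⟨t, Nat.lt_of_succ_lt ht⟩) := by
  simp only [HaradaData.P, Function.iterate_succ_apply']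

theorem aux_P_anti {R : Type} [Ring R] (H : HaradaData R) (i : Fin H.m) (s t : ℕ) (hst : s ≤ t)
    (ht : t < H.n i) : H.P i ⟨t, ht⟩ ≤ H.P i ⟨s, hst.trans_lt ht⟩ := by
  induction t, hst using Nat.le_induction with
  | base => exact le_rfl
  | succ t hst ih =>
    rw [aux_P_succ]
    exact (aux_radSub_le _).trans (ih _)

theorem aux_chain {R : Type} [Ring R] [IsNoetherian Rᵐᵒᵖ R] [IsArtinian Rᵐᵒᵖ R]
    (H : HaradaData R) (i : Fin H.m) (N : Submodule Rᵐᵒᵖ R)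
    (hN : N ≤ H.P i ⟨0, H.hn i⟩) (t : ℕ) (ht : t < H.n i) :
    N ≤ radSub (H.P i ⟨t, ht⟩) ∨ ∃ s, N = H.P i s := by
  induction t with
  | zero =>
    by_cases h : N = H.P i ⟨0, H.hn i⟩
    · exact Or.inr ⟨_, h⟩
    · exact Or.inl (aux_le_radSub _ (aux_P_indec H i _) (aux_P_proj H i _) N hN h)
  | succ t ih =>
    rcases ih (Nat.lt_of_succ_lt ht) with h1 | h1
    · rw [← aux_P_succ H i t ht] at h1
      by_cases h : N = H.P i ⟨t + 1, ht⟩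
      · exact Or.inr ⟨_, h⟩
      · exact Or.inl (aux_le_radSub _ (aux_P_indec H i _) (aux_P_proj H i _) N h1 h)
    · exact Or.inr h1

theorem aux_inj_eq {R : Type} [Ring R] [IsNoetherian Rᵐᵒᵖ R] [IsArtinian Rᵐᵒᵖ R]
    (H : HaradaData R) (i k : Fin H.m) (j : Fin (H.n i)) (l : Fin (H.n k))
    (f : ↥(H.P i j) →ₗ[Rᵐᵒᵖ] ↥(H.P k l)) (hf : Function.Injective f) : i = k := by
  have hIi : Module.Injective Rᵐᵒᵖ (H.P i ⟨0, H.hn i⟩) := H.inj i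
  have hIk : Module.Injective Rᵐᵒᵖ (H.P k ⟨0, H.hn k⟩) := H.inj k
  have hij : H.P i j ≤ H.P i ⟨0, H.hn i⟩ := aux_P_anti H i 0 j.1 (Nat.zero_le _) j.2
  have hkl : H.P k l ≤ H.P k ⟨0, H.hn k⟩ := aux_P_anti H k 0 l.1 (Nat.zero_le _) l.2
  obtain ⟨g, hg⟩ := hIk.out (Submodule.inclusion hij) (Submodule.inclusion_injective hij)
    ((Submodule.inclusion hkl).comp f)
  have hd : Disjoint (LinearMap.range (Submodule.inclusion hij)) (LinearMap.ker g) := by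
    rw [Submodule.disjoint_def]
    rintro _ ⟨x, rfl⟩ hx
    rw [LinearMap.mem_ker, hg] at hx
    have h0 : f x = 0 := Submodule.inclusion_injective hkl (by rw [map_zero]; exact hx)
    rw [hf (h0.trans (map_zero f).symm), map_zero]
  have hne : LinearMap.range (Submodule.inclusion hij) ≠ ⊥ := by
    intro h
    have h0 := LinearMap.range_eq_bot.mp h
    have hnt := (aux_P_indec H i j).1
    obtain ⟨x, hx⟩ := exists_ne (0 : H.P i j)
    apply hx
    apply Submodule.inclusion_injective hij
    rw [h0]; rfl
  have hker := aux_uniform (aux_P_indec H i _) hIi _ _ hne hd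
  have hginj : Function.Injective g := LinearMap.ker_eq_bot.mp hker
  obtain ⟨r, hr⟩ := hIi.out g hginj LinearMap.id
  have := (aux_P_indec H i ⟨0, H.hn i⟩).1
  have hrinj := aux_split_inj (aux_P_indec H k ⟨0, H.hn k⟩) r g hr
  have hrsurj : Function.Surjective r := fun x => ⟨g x, hr x⟩
  by_contra hik
  exact (H.basic ⟨k, ⟨0, H.hn k⟩⟩ ⟨i, ⟨0, H.hn i⟩⟩
    (fun h => hik (congrArg Sigma.fst h).symm)).false (LinearEquiv.ofBijective r ⟨hrinj, hrsurj⟩)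

end Helpers

/-- Lemma 2.2(2),(3),(4).  A homomorphism `f : P_{ij} → P_{kl}` is
non-injective iff its image is contained in `rad(P_{k n_k})`; in particular this happens
if `i = k` and `j < l`, or if `i ≠ k`. -/
theorem statement4 (K R : Type) [Field K] [IsAlgClosed K] [Ring R] [Algebra K R]
    [FiniteDimensional K R] (H : HaradaData R) (i k : Fin H.m)
    (j : Fin (H.n i)) (l : Fin (H.n k))
    (f : ↥(H.P i j) →ₗ[Rᵐᵒᵖ] ↥(H.P k l)) :
    (¬ Function.Injective f ↔
      Submodule.map (H.P k l).subtype (LinearMap.range f) ≤ radSub (H.P k (H.last k))) ∧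
    ((i = k ∧ j.val < l.val) ∨ i ≠ k →
      Submodule.map (H.P k l).subtype (LinearMap.range f) ≤ radSub (H.P k (H.last k))) := by
  have : IsScalarTower K Rᵐᵒᵖ R := ⟨fun a b c => by
    change c * (a • unop b) = a • (c * unop b)
    exact mul_smul_comm _ _ _⟩
  have hNo : IsNoetherian Rᵐᵒᵖ R := isNoetherian_of_tower K inferInstance
  have hAr : IsArtinian Rᵐᵒᵖ R := isArtinian_of_tower K inferInstance
  have hlast := (aux_P_indec H k (H.last k)).1
  have hlt : radSub (H.P k (H.last k)) < H.P k (H.last k) := aux_radSub_lt _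
  -- the image of a non-injective homomorphism
  have hA : ¬ Function.Injective f →
      Submodule.map (H.P k l).subtype (LinearMap.range f) ≤ radSub (H.P k (H.last k)) := by
    intro hf
    have hN : Submodule.map (H.P k l).subtype (LinearMap.range f) ≤ H.P k ⟨0, H.hn k⟩ :=
      (Submodule.map_subtype_le _ _).trans (aux_P_anti H k 0 l.1 (Nat.zero_le _) l.2)
    rcases aux_chain H k _ hN (H.last k).1 (H.last k).2 with h | ⟨s, h⟩
    · exact h
    · exfalso
      apply hf
      let g : ↥(H.P i j) →ₗ[Rᵐᵒᵖ] ↥(H.P k s) :=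
        ((H.P k l).subtype.comp f).codRestrict _ (fun x => by
          rw [← h]; exact ⟨f x, ⟨x, rfl⟩, rfl⟩)
      have hgs : Function.Surjective g := by
        rintro ⟨y, hy⟩
        rw [← h] at hy
        obtain ⟨_, ⟨x, rfl⟩, hx⟩ := hy
        exact ⟨x, Subtype.ext hx⟩
      have := aux_P_proj H k s
      have := (aux_P_indec H k s).1
      obtain ⟨σ, hσ⟩ := Module.projective_lifting_property g LinearMap.id hgs
      have hgi := aux_split_inj (aux_P_indec H i j) g σ (fun x => LinearMap.congr_fun hσ x)
      intro x y hxy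
      apply hgi
      apply Subtype.ext
      change ((f x : H.P k l) : R) = (f y : H.P k l)
      rw [hxy]
  refine ⟨⟨hA, fun hle hf => ?_⟩, fun hcase => hA fun hf => ?_⟩
  · obtain rfl := aux_inj_eq H i k j l f hf
    have h1 : H.P i (H.last i) ≤ H.P i j :=
      aux_P_anti H i j.1 (H.last i).1 (Nat.le_sub_one_of_lt j.2) (H.last i).2
    exact aux_no_inj _ _ (hlt.trans_le h1) ((H.P i l).subtype.comp f)
      ((H.P i l).injective_subtype.comp hf) (fun x => hle ⟨f x, ⟨x, rfl⟩, rfl⟩)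
  · have hik := aux_inj_eq H i k j l f hf
    rcases hcase with ⟨_, hjl⟩ | h
    · subst hik
      have hj := (aux_P_indec H i j).1
      have h1 : H.P i l ≤ radSub (H.P i j) := by
        have := aux_P_succ H i j.1 (lt_of_le_of_lt hjl l.2)
        rw [← this]
        exact aux_P_anti H i (j.1 + 1) l.1 hjl l.2
      exact aux_no_inj _ _ (h1.trans_lt (aux_radSub_lt _)) ((H.P i l).subtype.comp f)
        ((H.P i l).injective_subtype.comp hf) (fun x => (f x).2)
    · exact h hik
end

section
/- Let R be a basic left Harada algebra with modules P_{ij} := rad^{j-1}(e_{i1}R) as below, and let f : P_{ij} → P_{il} be an injective homomorphism of right R-modules with j ≥ l. Then for every homomorphism g : P_{ij} → P_{il'} with l ≥ l', there exists a homomorphism h : P_{il} → P_{il'} such that g = h ∘ f. -/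
/-!
Common setup.  `K` is an algebraically closed field and `R` a finite-dimensional associative
unital `K`-algebra.  Right `R`-modules are formalized as modules over the opposite ring `Rᵐᵒᵖ`
(so that `MulOpposite.op r • x = x * r`).
-/

open MulOpposite

variable {R : Type} [Ring R]

section Helpers

variable {A : Type} [Ring A]

theorem coatom_unique_aux {X : Type} [AddCommGroup X] [Module A X] [IsNoetherian A X]
    [IsArtinian A X] [Module.Projective A X] (hX : IsIndecomposableMod A X)
    (M M' : Submodule A X) (hM : IsCoatom M) (hM' : IsCoatom M') : M' ≤ M := by
  by_contra hle
  have hsup : M ⊔ M' = ⊤ := by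
    apply hM.2
    exact lt_of_le_of_ne le_sup_left (fun h => hle (by rw [h]; exact le_sup_right))
  have hsurj : Function.Surjective (M.mkQ ∘ₗ M'.subtype) := by
    intro q
    obtain ⟨x, rfl⟩ := M.mkQ_surjective q
    have hx : x ∈ M ⊔ M' := by rw [hsup]; trivial
    obtain ⟨a, ha, b, hb, rfl⟩ := Submodule.mem_sup.1 hx
    refine ⟨⟨b, hb⟩, ?_⟩
    simp [ha]
  obtain ⟨φ, hφ⟩ := Module.projective_lifting_property (M.mkQ ∘ₗ M'.subtype) M.mkQ hsurj
  let ψ : Module.End A X := M'.subtype ∘ₗ φ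
  have hψ : ∀ x, M.mkQ (ψ x) = M.mkQ x := fun x => LinearMap.congr_fun hφ x
  have hψn : ∀ (n : ℕ) x, M.mkQ ((ψ ^ n) x) = M.mkQ x := by
    intro n
    induction n with
    | zero => intro x; simp
    | succ n ih => intro x; rw [pow_succ, Module.End.mul_apply, ih, hψ]
  obtain ⟨n, hn⟩ := Filter.eventually_atTop.1 (LinearMap.eventually_isCompl_ker_pow_range_pow ψ)
  have hc := hn (n + 1) (Nat.le_succ n)
  rcases hX.2 _ _ hc with h | h
  · rw [h] at hc
    have ht : LinearMap.range (ψ ^ (n + 1)) = ⊤ := by simpa using hc.sup_eq_top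
    apply hM'.1
    rw [eq_top_iff, ← ht]
    rintro _ ⟨x, rfl⟩
    rw [pow_succ', Module.End.mul_apply]
    exact (φ _).2
  · apply hM.1
    rw [eq_top_iff]
    intro x _
    have h0 : (ψ ^ (n + 1)) x = 0 := by
      have : (ψ ^ (n + 1)) x ∈ LinearMap.range (ψ ^ (n + 1)) := ⟨x, rfl⟩
      rwa [h, Submodule.mem_bot] at this
    have := hψn (n + 1) x
    rw [h0, map_zero] at this
    simpa using this.symm

theorem IsIndecomposableMod.of_equiv {X Y : Type} [AddCommGroup X] [Module A X]
    [AddCommGroup Y] [Module A Y] (e : X ≃ₗ[A] Y) (hX : IsIndecomposableMod A X) :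
    IsIndecomposableMod A Y := by
  refine ⟨(e.symm.toEquiv.nontrivial_congr).2 hX.1, fun N N' h => ?_⟩
  have := hX.2 _ _ (h.map (Submodule.orderIsoMapComap e).symm)
  rwa [map_eq_bot_iff, map_eq_bot_iff] at this

theorem radSub_le {X : Type} [AddCommGroup X] [Module A X] (N : Submodule A X) :
    radSub N ≤ N := Submodule.map_subtype_le _ _

theorem radSub_equiv {X : Type} [AddCommGroup X] [Module A X] {N N' : Submodule A X}
    (e : N ≃ₗ[A] N') : Nonempty (radSub N ≃ₗ[A] radSub N') := by
  have h : Submodule.map (e : N →ₗ[A] N') (Module.jacobson A N) = Module.jacobson A N' :=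
    Module.map_jacobson_of_bijective e.bijective
  exact ⟨((Submodule.equivMapOfInjective N.subtype N.injective_subtype _).symm.trans
    ((e.submoduleMap (Module.jacobson A N)).trans (LinearEquiv.ofEq _ _ h))).trans
    (Submodule.equivMapOfInjective N'.subtype N'.injective_subtype _)⟩

/-- In a noetherian submodule which is projective and indecomposable, proper submodules lie
in the radical. -/
theorem le_radSub_of_lt {X : Type} [AddCommGroup X] [Module A X] [IsNoetherian A X]
    [IsArtinian A X] (P N : Submodule A X) [Module.Projective A P]
    (hP : IsIndecomposableMod A P) (hN : N < P) : N ≤ radSub P := by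
  have h1 : N.comap P.subtype ≠ ⊤ := by
    intro h
    rw [Submodule.comap_subtype_eq_top] at h
    exact absurd hN (not_lt_of_ge h)
  obtain ⟨M, hM, hle⟩ := (eq_top_or_exists_le_coatom (N.comap P.subtype)).resolve_left h1
  intro x hx
  refine ⟨⟨x, hN.le hx⟩, ?_, rfl⟩
  refine Submodule.mem_sInf.2 fun M' hM' => ?_
  exact coatom_unique_aux hP M' M hM' hM (hle hx)

theorem projective_rightIdeal {S : Type} [Ring S] (x : S) (hx : IsIdempotentElem x) :
    Module.Projective Sᵐᵒᵖ (rightIdeal S x) := by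
  have hxm : x ∈ rightIdeal S x := Submodule.mem_span_singleton_self x
  have key : ∀ y ∈ rightIdeal S x, x * y = y := by
    intro y hy
    obtain ⟨r, rfl⟩ := Submodule.mem_span_singleton.1 hy
    rw [MulOpposite.smul_eq_mul_unop, ← mul_assoc, hx.eq]
  let i : rightIdeal S x →ₗ[Sᵐᵒᵖ] Sᵐᵒᵖ :=
    { toFun := fun y => op y.1
      map_add' := fun _ _ => rfl
      map_smul' := fun r y => by simp [MulOpposite.smul_eq_mul_unop] }
  let s : Sᵐᵒᵖ →ₗ[Sᵐᵒᵖ] rightIdeal S x := LinearMap.toSpanSingleton _ _ ⟨x, hxm⟩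
  refine Module.Projective.of_split i s ?_
  ext y
  simp [i, s, LinearMap.toSpanSingleton_apply, key]

theorem HaradaData.P_equiv {S : Type} [Ring S] (H : HaradaData S) (i : Fin H.m) :
    ∀ (k : ℕ) (hk : k < H.n i),
      Nonempty (rightIdeal S (H.e i ⟨k, hk⟩) ≃ₗ[Sᵐᵒᵖ] H.P i ⟨k, hk⟩)
  | 0, hk => ⟨LinearEquiv.refl _ _⟩
  | k + 1, hk => by
    obtain ⟨e⟩ := HaradaData.P_equiv H i k (Nat.lt_of_succ_lt hk)
    obtain ⟨e1⟩ := radSub_equiv e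
    obtain ⟨e2⟩ := H.rad_iso i ⟨k + 1, hk⟩ (Nat.succ_pos k)
    have h : radSub (H.P i ⟨k, Nat.lt_of_succ_lt hk⟩) = H.P i ⟨k + 1, hk⟩ := by
      simp only [HaradaData.P, Function.iterate_succ_apply']
    exact ⟨(e2.trans e1).trans (LinearEquiv.ofEq _ _ h)⟩

theorem iterate_radSub_anti {X : Type} [AddCommGroup X] [Module A X] (N : Submodule A X) :
    Antitone (fun k : ℕ => radSub^[k] N) :=
  antitone_nat_of_succ_le fun k => by
    rw [Function.iterate_succ_apply']; exact radSub_le _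

end Helpers

/-- Lemma 2.3(1).  Let `f : P_{ij} → P_{il}` be injective, `j ≥ l`.  Every
`g : P_{ij} → P_{il'}` with `l ≥ l'` factors as `g = h ∘ f`. -/
theorem statement5 (K R : Type) [Field K] [IsAlgClosed K] [Ring R] [Algebra K R]
    [FiniteDimensional K R] (H : HaradaData R) (i : Fin H.m) (j l l' : Fin (H.n i))
    (f : ↥(H.P i j) →ₗ[Rᵐᵒᵖ] ↥(H.P i l)) (hf : Function.Injective f) (hjl : l ≤ j)
    (g : ↥(H.P i j) →ₗ[Rᵐᵒᵖ] ↥(H.P i l')) (hl' : l' ≤ l) :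
    ∃ h : ↥(H.P i l) →ₗ[Rᵐᵒᵖ] ↥(H.P i l'), g = h.comp f := by
  have hNo : IsNoetherian Rᵐᵒᵖ R := isNoetherian_of_tower K inferInstance
  have hAr : IsArtinian Rᵐᵒᵖ R := isArtinian_of_tower K inferInstance
  let Q : ℕ → Submodule Rᵐᵒᵖ R := fun k => radSub^[k] (rightIdeal R (H.e i ⟨0, H.hn i⟩))
  have hQ : Antitone Q := iterate_radSub_anti _
  have hinj := H.inj i
  obtain ⟨h, hh⟩ := hinj.out f hf
    ((Submodule.inclusion (show H.P i l' ≤ Q 0 from hQ (Nat.zero_le l'.val))).comp g)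
  let h' : H.P i l →ₗ[Rᵐᵒᵖ] R := (Submodule.subtype _).comp h
  have main : ∀ k : ℕ, k ≤ l.val → LinearMap.range h' ≤ Q k := by
    intro k
    induction k with
    | zero =>
      rintro - _ ⟨x, rfl⟩
      exact (h x).2
    | succ k ih =>
      intro hk
      have hle := ih (Nat.le_of_succ_le hk)
      have hs : Q (k + 1) = radSub (Q k) := Function.iterate_succ_apply' _ _ _
      rcases hle.eq_or_lt with heq | hlt
      · have h1 : Module.length Rᵐᵒᵖ (LinearMap.range h') ≤ Module.length Rᵐᵒᵖ (H.P i l) :=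
          Module.length_le_of_surjective h'.rangeRestrict h'.surjective_rangeRestrict
        have h2 : H.P i l ≤ Q (k + 1) := hQ hk
        rw [heq, Module.length_submodule, Module.length_submodule] at h1
        by_contra hcon
        have h3 : H.P i l < Q k := lt_of_le_of_ne (h2.trans (hQ (Nat.le_succ k)))
          (fun h4 => hcon (by rw [heq, ← h4]; exact h2))
        exact absurd (Submodule.height_strictMono h3) (not_lt_of_ge h1)
      · have hkn : k < H.n i := lt_of_lt_of_le hk l.isLt.le
        obtain ⟨e⟩ := H.P_equiv i k hkn
        have hp := projective_rightIdeal _ (H.idem i ⟨k, hkn⟩)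
        have hp' : Module.Projective Rᵐᵒᵖ (Q k) := Module.Projective.of_equiv e
        rw [hs]
        exact le_radSub_of_lt _ _ ((H.indec i ⟨k, hkn⟩).of_equiv e) hlt
  have hr := main l'.val hl'
  refine ⟨LinearMap.codRestrict (H.P i l') h' fun x => hr ⟨x, rfl⟩, ?_⟩
  ext x
  exact (congrArg Subtype.val (hh x)).symm
end
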